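/- (The tilted conditional law of the balancing weight is a valid CDF.) Fix a ∈ 𝒜 and x ∈ 𝒳 with e_a(x) ∈ (0,1). Let E be a random variable with values in (0,1) defined on the same probability space as (X,Y,A) and satisfying E[1{A=a}/E | X = x] = 1. Let H(e|x,a) = P(E ≤ e | X = x, A = a). Then the function K_a(u|x) = ∫_{(0,u]} (e_a(x)/(1−e_a(x)))·((1−e)/e) dH(e|x,a) is a cumulative distribution function: it is nondecreasing, right-continuous, and satisfies lim_{u→1} K_a(u|x) = 1. -/

import Mathlib

open MeasureTheory Set Filter

noncomputable section

namespace MSM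

/-- The tilted conditional law of the balancing weight is a valid CDF.
Let `εa = e_a(x) ∈ (0,1)` and let `H` be the conditional law of the balancing weight `E`
given `X = x, A = a`, a probability measure supported on `(0,1)` with
`εa ⬝ ∫ 1/e dH = 1` (the conditional balance `E[1{A=a}/E | X = x] = 1`).  Then
`K_a(u|x) = ∫_{(0,u]} (εa/(1-εa)) ((1-e)/e) dH(e)` is a cumulative distribution function:
nondecreasing, right-continuous, with limit `1` as `u → 1⁻`. -/
theorem tilted_balancing_law_is_CDF
    (εa : ℝ) (hεa : εa ∈ Set.Ioo (0:ℝ) 1)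
    (H : Measure ℝ) [IsProbabilityMeasure H]
    (hsupp : H (Set.Ioo (0:ℝ) 1) = 1)
    (hint : Integrable (fun e => e⁻¹) H)
    (hbal : εa * ∫ e, e⁻¹ ∂H = 1) :
    Monotone (fun u : ℝ => ∫ e in Set.Ioc 0 u, εa / (1 - εa) * ((1 - e) / e) ∂H) ∧
    (∀ u : ℝ, ContinuousWithinAt
      (fun u' : ℝ => ∫ e in Set.Ioc 0 u', εa / (1 - εa) * ((1 - e) / e) ∂H)
      (Set.Ici u) u) ∧
    Filter.Tendsto (fun u : ℝ => ∫ e in Set.Ioc 0 u, εa / (1 - εa) * ((1 - e) / e) ∂H)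
      (nhdsWithin 1 (Set.Iio 1)) (nhds (1:ℝ)) := by
  obtain ⟨h0, h1⟩ := hεa
  have hc : 0 < 1 - εa := by linarith
  have hae : ∀ᵐ e ∂H, e ∈ Set.Ioo (0:ℝ) 1 :=
    (prob_compl_eq_zero_iff measurableSet_Ioo).2 hsupp
  have hEq : (fun e : ℝ => εa / (1 - εa) * (e⁻¹ - 1)) =ᵐ[H]
      (fun e : ℝ => εa / (1 - εa) * ((1 - e) / e)) := by
    filter_upwards [hae] with e he
    have : e ≠ 0 := he.1.ne'
    have h2 : (1 - e) / e = e⁻¹ - 1 := by field_simp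
    rw [h2]
  have hg : Integrable (fun e : ℝ => εa / (1 - εa) * ((1 - e) / e)) H :=
    ((hint.sub (integrable_const 1)).const_mul _).congr hEq
  have htot : ∫ e, εa / (1 - εa) * ((1 - e) / e) ∂H = 1 := by
    rw [← integral_congr_ae hEq, integral_const_mul, integral_sub hint (integrable_const 1)]
    simp only [integral_const, probReal_univ, smul_eq_mul, mul_one]
    rw [div_mul_eq_mul_div, mul_sub, hbal, mul_one, div_self hc.ne']
  have hnn : 0 ≤ᵐ[H] (fun e : ℝ => εa / (1 - εa) * ((1 - e) / e)) := by
    filter_upwards [hae] with e he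
    exact mul_nonneg (div_nonneg h0.le hc.le)
      (div_nonneg (by linarith [he.2]) he.1.le)
  refine ⟨?_, ?_, ?_⟩
  · intro u v huv
    exact setIntegral_mono_set hg.integrableOn (ae_restrict_of_ae hnn)
      (Set.Ioc_subset_Ioc_right huv).eventuallyLE
  · intro u
    unfold ContinuousWithinAt
    simp only [← integral_indicator (measurableSet_Ioc (α := ℝ))]
    refine tendsto_integral_filter_of_dominated_convergence
      (fun e => ‖εa / (1 - εa) * ((1 - e) / e)‖) ?_ ?_ hg.norm ?_
    · exact Eventually.of_forall fun v =>
        hg.aestronglyMeasurable.indicator measurableSet_Ioc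
    · exact Eventually.of_forall fun v => Eventually.of_forall fun e =>
        norm_indicator_le_norm_self _ _
    · refine Eventually.of_forall fun e => ?_
      refine tendsto_const_nhds.congr' ?_
      rcases le_or_gt e u with h | h
      · filter_upwards [self_mem_nhdsWithin] with v hv
        have h3 : e ≤ v := h.trans hv
        simp only [Set.indicator, Set.mem_Ioc, h, h3]
      · filter_upwards [mem_nhdsWithin_of_mem_nhds (Iio_mem_nhds h)] with v hv
        have h3 : ¬ e ≤ v := not_le.2 hv
        have h4 : ¬ e ≤ u := not_le.2 h
        simp only [Set.indicator, Set.mem_Ioc, h4, h3]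
  · suffices hs : Filter.Tendsto
        (fun u : ℝ => ∫ e in Set.Ioc 0 u, εa / (1 - εa) * ((1 - e) / e) ∂H)
        (nhdsWithin 1 (Set.Iio 1))
        (nhds (∫ e, εa / (1 - εa) * ((1 - e) / e) ∂H)) by
      rwa [htot] at hs
    simp only [← integral_indicator (measurableSet_Ioc (α := ℝ))]
    refine tendsto_integral_filter_of_dominated_convergence
      (fun e => ‖εa / (1 - εa) * ((1 - e) / e)‖) ?_ ?_ hg.norm ?_
    · exact Eventually.of_forall fun v =>
        hg.aestronglyMeasurable.indicator measurableSet_Ioc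
    · exact Eventually.of_forall fun v => Eventually.of_forall fun e =>
        norm_indicator_le_norm_self _ _
    · filter_upwards [hae] with e he
      refine tendsto_const_nhds.congr' ?_
      filter_upwards [mem_nhdsWithin_of_mem_nhds (Ioi_mem_nhds he.2)] with v hv
      rw [Set.indicator_of_mem]
      exact ⟨he.1, le_of_lt hv⟩

end MSM
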